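/- Inverse problem for βx+α mod 1 (first form). Let k ≥ 2 and let u, v ∈ A^ℕ satisfy u₀ = 0, v₀ = k−1, and u ≼ σⁿu ≺ v and u ≺ σⁿv ≼ v for all n ≥ 0; if k = 2 assume additionally σu ≼ σv. Let û := sup{σⁿu : n ≥ 0} (supremum in the lexicographic order) and β̂ := 2^{h(Σ(u,û))}. Suppose (ᾱ,β̄) ∈ [0,1]×(1,∞) satisfies φ̄_∞^{ᾱ,β̄}(σu) = ᾱ and φ̄_∞^{ᾱ,β̄}(σv) = ᾱ+β̄−k+1. Then: (1) if β̂ < β̄, then u = u^{ᾱ,β̄} and v = v^{ᾱ,β̄}; (2) if β̂ = β̄ and u^{ᾱ,β̄}, v^{ᾱ,β̄} are not both periodic, then u = u^{ᾱ,β̄} and v = v^{ᾱ,β̄}; (3) if β̂ = β̄ and u^{ᾱ,β̄}, v^{ᾱ,β̄} are both periodic, then u ≠ u^{ᾱ,β̄} and v ≠ v^{ᾱ,β̄}. -/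

import Mathlib

open Filter Set

/-- The shift map on one-sided sequences. -/
def shft (x : ℕ → ℕ) : ℕ → ℕ := fun n => x (n + 1)

/-- Strict lexicographic order on one-sided sequences:
`x ≺ y` iff they differ and `x m < y m` at the first index `m` where they differ. -/
def lexLt (x y : ℕ → ℕ) : Prop := ∃ m, (∀ i, i < m → x i = y i) ∧ x m < y m

/-- Lexicographic order `x ≼ y` on one-sided sequences. -/
def lexLe (x y : ℕ → ℕ) : Prop := x = y ∨ lexLt x y

/-- The map `φ̄^{α,β} : ℝ → [0,1]`:  `0` for `t ≤ α`, `(t-α)/β` for `α ≤ t ≤ α+β`,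
`1` for `t ≥ α+β`. -/
noncomputable def phiB (α β t : ℝ) : ℝ :=
  if t ≤ α then 0 else if α + β ≤ t then 1 else (t - α) / β

/-- `φ̄ₙ^{α,β}(x) = φ̄^{α,β}(x₀ + φ̄^{α,β}(x₁ + ⋯ + φ̄^{α,β}(x_{n-1})⋯))`. -/
noncomputable def phiBN (α β : ℝ) : ℕ → (ℕ → ℕ) → ℝ
  | 0, _ => 0
  | n + 1, x => phiB α β (x 0 + phiBN α β n (shft x))

/-- `φ̄_∞^{α,β}(x) = limₙ φ̄ₙ^{α,β}(x)`; the sequence `φ̄ₙ^{α,β}(x)` is nondecreasing in `n`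
and bounded, so its limit is its supremum. -/
noncomputable def phiBInf (α β : ℝ) (x : ℕ → ℕ) : ℝ := ⨆ n, phiBN α β n x

/-- `T̂_{α,β}(x) = βx + α − ⌊βx + α⌋`. -/
noncomputable def Tlow (α β x : ℝ) : ℝ := β * x + α - ⌊β * x + α⌋

/-- `Ť_{α,β}(x) = βx + α + 1 − ⌈βx + α⌉`. -/
noncomputable def Thigh (α β x : ℝ) : ℝ := β * x + α + 1 - ⌈β * x + α⌉

/-- `k = ⌈α + β⌉`, the size of the alphabet `A = {0, …, k-1}`. -/
noncomputable def kAB (α β : ℝ) : ℕ := (⌈α + β⌉).toNat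

/-- The string `u^{α,β}`, the coding of the orbit of `0`:
`u^{α,β}ₙ = ⌊β T̂ⁿ_{α,β}(0) + α⌋`. -/
noncomputable def uItin (α β : ℝ) : ℕ → ℕ := fun n => (⌊β * (Tlow α β)^[n] 0 + α⌋).toNat

/-- The string `v^{α,β}`, the coding of the orbit of `1`:
`v^{α,β}ₙ = ⌈β Ťⁿ_{α,β}(1) + α⌉ − 1`. -/
noncomputable def vItin (α β : ℝ) : ℕ → ℕ := fun n => (⌈β * (Thigh α β)^[n] 1 + α⌉ - 1).toNat

/-- The shift space `Σ(u,v) = {x ∈ A^ℕ : u ≼ σⁿx ≼ v for all n ≥ 0}`, `A = {0,…,k-1}`. -/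
def SigSet (k : ℕ) (u v : ℕ → ℕ) : Set (ℕ → ℕ) :=
  {x | (∀ i, x i < k) ∧ ∀ n, lexLe u (shft^[n] x) ∧ lexLe (shft^[n] x) v}

/-- The number of words of length `n` in the language of `Σ(u,v)` (prefixes of elements). -/
noncomputable def nWords (k : ℕ) (u v : ℕ → ℕ) (n : ℕ) : ℕ :=
  Nat.card {w : Fin n → ℕ // ∃ x ∈ SigSet k u v, ∀ i : Fin n, x i.1 = w i}

/-- The topological entropy (base 2) of `Σ(u,v)`:
`h = limₙ (1/n) log₂ card(Lₙ)` (the limit exists by subadditivity, so it equals the limsup;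
it is `0` when `Σ(u,v) = ∅`). -/
noncomputable def entS (k : ℕ) (u v : ℕ → ℕ) : ℝ :=
  Filter.limsup (fun n : ℕ => Real.logb 2 (nWords k u v n) / (n : ℝ)) Filter.atTop

/-- Concatenation of the word `w₀ ⋯ w_{p-1}` (the first `p` letters of `w`) with the
string `y`. -/
def wcat (p : ℕ) (w y : ℕ → ℕ) : ℕ → ℕ := fun n => if n < p then w n else y (n - p)

/-!
Write `U n = φ̄_∞(σⁿu)` and `V n = φ̄_∞(σⁿv)`. These are orbits of `y ↦ βy + α mod 1` in `[0, 1]`,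
coded by `u` and `v`, that start at `0` and `1`. By expansion, two orbits `s`, `t` coded by `x ≺ y`
satisfy `(1 - s j) + t j ≤ βʲ (t 0 - s 0)` for some `j`. Hence `U` reaches `1` if and only if `V`
reaches `0`, and `u`, `v` are the codings of the orbits of `0` and `1` precisely if this does not
happen.

If `U` reaches `1`, then the codings of the orbits of `0` and `1` are periodic, and the itinerary of
every point of `[0, 1)` lies in `Σ(u,û)`. Points at distance `β⁻ⁿ` are separated by their
itineraries up to time `n`, so `h(Σ(u,û)) ≥ log₂ β`.

If `U` stays below `1` and `u` is periodic, then `û = σᵐu` for some `m`, and `a = 1 - U m` is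
positive. A word of `Σ(u,û)` may be continued according to the positions `i`, `j` of `u` at which
its agreement with `u` and `û` currently stands. Give these positions the weight `U j - U i + a`:
the weights reached by reading one more letter add up to `β (U j - U i) + a`, which is at most
`γ (U j - U i + a)` for `γ = (β + a) / (1 + a)`. So there are at most `γⁿ / a` words of length `n`,
and `h(Σ(u,û)) ≤ log₂ γ < log₂ β`.
-/

/-! ### Shift and lexicographic order -/

theorem shft_iterate_apply (n : ℕ) (x : ℕ → ℕ) (i : ℕ) : shft^[n] x i = x (i + n) := by
  induction n generalizing x with
  | zero => rfl
  | succ n ih => rw [Function.iterate_succ_apply, ih, shft, add_assoc]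

theorem lexLe_iff_toLex_le {x y : ℕ → ℕ} : lexLe x y ↔ toLex x ≤ toLex y :=
  (le_iff_eq_or_lt (a := toLex x) (b := toLex y)).symm

theorem not_lexLe {x y : ℕ → ℕ} : ¬lexLe x y ↔ lexLt y x :=
  lexLe_iff_toLex_le.not.trans not_le

theorem lexLe.antisymm {x y : ℕ → ℕ} (hxy : lexLe x y) (hyx : lexLe y x) : x = y :=
  toLex_inj.1 ((lexLe_iff_toLex_le.1 hxy).antisymm (lexLe_iff_toLex_le.1 hyx))

theorem lexLe.trans_lexLt {x y z : ℕ → ℕ} (hxy : lexLe x y) (hyz : lexLt y z) : lexLt x z :=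
  (lexLe_iff_toLex_le.1 hxy).trans_lt (b := toLex y) (c := toLex z) hyz

theorem lexLe.head_lt_or_tail {x y : ℕ → ℕ} (h : lexLe x y) :
    x 0 < y 0 ∨ x 0 = y 0 ∧ lexLe (shft x) (shft y) := by
  rcases h with rfl | ⟨_ | m, heq, hlt⟩
  · exact .inr ⟨rfl, .inl rfl⟩
  · exact .inl hlt
  · exact .inr ⟨heq 0 m.succ_pos, .inr ⟨m, fun i hi => heq (i + 1) (Nat.succ_lt_succ hi), hlt⟩⟩

theorem lexLe.head_le {x y : ℕ → ℕ} (h : lexLe x y) : x 0 ≤ y 0 :=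
  h.head_lt_or_tail.elim le_of_lt fun h => h.1.le

/-! ### The functions `φ̄` -/

theorem phiB_eq_max_min {α β : ℝ} (hβ : 0 < β) (t : ℝ) :
    phiB α β t = max 0 (min 1 ((t - α) / β)) := by
  unfold phiB
  split_ifs with hlow hhigh
  · have : (t - α) / β ≤ 0 := div_nonpos_of_nonpos_of_nonneg (sub_nonpos.2 hlow) hβ.le
    rw [min_eq_right (this.trans zero_le_one), max_eq_left this]
  · rw [min_eq_left ((one_le_div₀ hβ).2 (by linarith)), max_eq_right zero_le_one]
  · rw [min_eq_right ((div_le_one₀ hβ).2 (by linarith)),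
      max_eq_right (div_nonneg (by linarith) hβ.le)]

theorem phiB_mono {α β : ℝ} (hβ : 0 < β) : Monotone (phiB α β) := fun s t hst => by
  rw [phiB_eq_max_min hβ, phiB_eq_max_min hβ]
  gcongr

theorem continuous_phiB {α β : ℝ} (hβ : 0 < β) : Continuous (phiB α β) := by
  rw [funext (phiB_eq_max_min hβ)]
  fun_prop

theorem phiB_mem_Icc {α β : ℝ} (hβ : 0 < β) (t : ℝ) : phiB α β t ∈ Icc 0 1 := by
  rw [phiB_eq_max_min hβ]
  exact ⟨le_max_left _ _, max_le zero_le_one (min_le_left _ _)⟩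

theorem phiBN_mem_Icc {α β : ℝ} (hβ : 0 < β) (n : ℕ) (x : ℕ → ℕ) : phiBN α β n x ∈ Icc 0 1 := by
  cases n with
  | zero => exact ⟨le_rfl, zero_le_one⟩
  | succ n => exact phiB_mem_Icc hβ _

theorem monotone_phiBN {α β : ℝ} (hβ : 0 < β) (x : ℕ → ℕ) :
    Monotone fun n => phiBN α β n x := by
  refine monotone_nat_of_le_succ fun n => ?_
  induction n generalizing x with
  | zero => exact (phiBN_mem_Icc hβ 1 x).1
  | succ n ih => exact phiB_mono hβ (add_le_add_right (ih (shft x)) _)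

theorem tendsto_phiBN {α β : ℝ} (hβ : 0 < β) (x : ℕ → ℕ) :
    Tendsto (fun n => phiBN α β n x) atTop (nhds (phiBInf α β x)) :=
  tendsto_atTop_ciSup (monotone_phiBN hβ x)
    ⟨1, forall_mem_range.2 fun n => (phiBN_mem_Icc hβ n x).2⟩

theorem phiBInf_mem_Icc {α β : ℝ} (hβ : 0 < β) (x : ℕ → ℕ) : phiBInf α β x ∈ Icc 0 1 :=
  isClosed_Icc.mem_of_tendsto (tendsto_phiBN hβ x) (.of_forall fun n => phiBN_mem_Icc hβ n x)

theorem phiBInf_eq_phiB {α β : ℝ} (hβ : 0 < β) (x : ℕ → ℕ) :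
    phiBInf α β x = phiB α β (x 0 + phiBInf α β (shft x)) :=
  tendsto_nhds_unique ((tendsto_add_atTop_iff_nat 1).2 (tendsto_phiBN hβ x))
    (((continuous_phiB hβ).tendsto _).comp ((tendsto_phiBN hβ (shft x)).const_add _))

theorem phiBN_le_of_lexLe {α β : ℝ} (hβ : 0 < β) (n : ℕ) {x y : ℕ → ℕ} (h : lexLe x y) :
    phiBN α β n x ≤ phiBN α β n y := by
  induction n generalizing x y with
  | zero => exact le_rfl
  | succ n ih =>
    refine phiB_mono hβ ?_
    rcases h.head_lt_or_tail with hlt | ⟨heq, htail⟩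
    · have hcast : (x 0 : ℝ) + 1 ≤ y 0 := by exact_mod_cast hlt
      linarith [(phiBN_mem_Icc (α := α) hβ n (shft x)).2, (phiBN_mem_Icc (α := α) hβ n (shft y)).1]
    · rw [heq]
      exact add_le_add_right (ih htail) _

theorem phiBInf_le_of_lexLe {α β : ℝ} (hβ : 0 < β) {x y : ℕ → ℕ} (h : lexLe x y) :
    phiBInf α β x ≤ phiBInf α β y :=
  le_of_tendsto_of_tendsto' (tendsto_phiBN hβ x) (tendsto_phiBN hβ y)
    fun n => phiBN_le_of_lexLe hβ n h

theorem phiBInf_shft_eq {α β : ℝ} (hβ : 0 < β) {x : ℕ → ℕ}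
    (h : x 0 + phiBInf α β (shft x) ∈ Icc α (α + β)) :
    phiBInf α β (shft x) = β * phiBInf α β x + α - x 0 := by
  rw [phiBInf_eq_phiB hβ x, phiB_eq_max_min hβ,
    min_eq_right ((div_le_one₀ hβ).2 (by linarith [h.2])),
    max_eq_right (div_nonneg (by linarith [h.1]) hβ.le), mul_div_cancel₀ _ hβ.ne']
  ring

/-! ### Coded orbits -/

/-- `s` is an orbit in `[0, 1]` of the multivalued map `y ↦ βy + α mod 1`, and `x` records the
integers that are subtracted. At integer values of `βy + α` the orbit may continue either from `0`,
as for `Tlow`, or from `1`, as for `Thigh`. -/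
structure IsCodedOrbit (α β : ℝ) (x : ℕ → ℕ) (s : ℕ → ℝ) : Prop where
  nonneg : ∀ n, 0 ≤ s n
  le_one : ∀ n, s n ≤ 1
  step : ∀ n, s (n + 1) = β * s n + α - x n

namespace IsCodedOrbit

variable {α β : ℝ} {x y : ℕ → ℕ} {s t : ℕ → ℝ}

theorem shift (hs : IsCodedOrbit α β x s) (m : ℕ) :
    IsCodedOrbit α β (shft^[m] x) fun n => s (n + m) where
  nonneg n := hs.nonneg _
  le_one n := hs.le_one _
  step n := by rw [shft_iterate_apply, ← hs.step, add_right_comm]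

theorem sub_eq_pow_mul_sub (hs : IsCodedOrbit α β x s) (ht : IsCodedOrbit α β y t) {m : ℕ}
    (hxy : ∀ i < m, x i = y i) : s m - t m = β ^ m * (s 0 - t 0) := by
  induction m with
  | zero => simp
  | succ m ih =>
    rw [hs.step, ht.step, hxy m m.lt_succ_self, pow_succ]
    linear_combination β * ih fun i hi => hxy i (hi.trans m.lt_succ_self)

theorem exists_le_pow_mul_sub (hs : IsCodedOrbit α β x s) (ht : IsCodedOrbit α β y t)
    (hxy : lexLt x y) : ∃ j, (1 - s j) + t j ≤ β ^ j * (t 0 - s 0) := by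
  obtain ⟨m, heq, hlt⟩ := hxy
  have hcast : (x m : ℝ) + 1 ≤ y m := by exact_mod_cast hlt
  refine ⟨m + 1, ?_⟩
  rw [hs.step, ht.step, pow_succ]
  linear_combination hcast - β * hs.sub_eq_pow_mul_sub ht heq

theorem le_of_lexLt (hs : IsCodedOrbit α β x s) (ht : IsCodedOrbit α β y t) (hβ : 0 < β)
    (hxy : lexLt x y) : s 0 ≤ t 0 := by
  obtain ⟨j, hj⟩ := hs.exists_le_pow_mul_sub ht hxy
  have : 0 ≤ β ^ j * (t 0 - s 0) := by linarith [hs.le_one j, ht.nonneg j]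
  exact sub_nonneg.1 (nonneg_of_mul_nonneg_right this (pow_pos hβ j))

theorem exists_eq_one_and_eq_zero (hs : IsCodedOrbit α β x s) (ht : IsCodedOrbit α β y t)
    (hxy : lexLt x y) (h0 : s 0 = t 0) : ∃ j, s j = 1 ∧ t j = 0 := by
  obtain ⟨j, hj⟩ := hs.exists_le_pow_mul_sub ht hxy
  rw [h0, sub_self, mul_zero] at hj
  exact ⟨j, by linarith [hs.le_one j, ht.nonneg j], by linarith [hs.le_one j, ht.nonneg j]⟩

end IsCodedOrbit

/-- The coding of the orbit of `y` under `Tlow α β`. -/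
noncomputable def lowItin (α β y : ℝ) : ℕ → ℕ := fun n => ⌊β * (Tlow α β)^[n] y + α⌋.toNat

/-- The coding of the orbit of `y` under `Thigh α β`. -/
noncomputable def highItin (α β y : ℝ) : ℕ → ℕ :=
  fun n => (⌈β * (Thigh α β)^[n] y + α⌉ - 1).toNat

section Itineraries

variable {α β : ℝ} {x : ℕ → ℕ} {s : ℕ → ℝ}

theorem semiconj_lowItin (α β : ℝ) : Function.Semiconj (lowItin α β) (Tlow α β) shft :=
  fun _ => rfl

theorem semiconj_highItin (α β : ℝ) : Function.Semiconj (highItin α β) (Thigh α β) shft :=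
  fun _ => rfl

theorem Thigh_eq (α β y : ℝ) : Thigh α β y = 1 - Int.fract (-(β * y + α)) := by
  rw [Thigh, Int.fract, Int.floor_neg]
  push_cast
  ring

theorem Tlow_iterate_mem_Ico {y : ℝ} (hy : y ∈ Ico 0 1) (n : ℕ) : (Tlow α β)^[n] y ∈ Ico 0 1 := by
  cases n with
  | zero => exact hy
  | succ n =>
    rw [Function.iterate_succ_apply']
    exact ⟨Int.fract_nonneg _, Int.fract_lt_one _⟩

theorem Thigh_iterate_mem_Ioc {y : ℝ} (hy : y ∈ Ioc 0 1) (n : ℕ) :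
    (Thigh α β)^[n] y ∈ Ioc 0 1 := by
  cases n with
  | zero => exact hy
  | succ n =>
    rw [Function.iterate_succ_apply', Thigh_eq]
    exact ⟨sub_pos.2 (Int.fract_lt_one _), sub_le_self _ (Int.fract_nonneg _)⟩

theorem isCodedOrbit_lowItin (hα : 0 ≤ α) (hβ : 0 ≤ β) {y : ℝ} (hy : y ∈ Ico 0 1) :
    IsCodedOrbit α β (lowItin α β y) fun n => (Tlow α β)^[n] y where
  nonneg n := (Tlow_iterate_mem_Ico hy n).1
  le_one n := (Tlow_iterate_mem_Ico hy n).2.le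
  step n := by
    have hfloor : 0 ≤ ⌊β * (Tlow α β)^[n] y + α⌋ :=
      Int.floor_nonneg.2 (add_nonneg (mul_nonneg hβ (Tlow_iterate_mem_Ico hy n).1) hα)
    have hdigit : (lowItin α β y n : ℝ) = ⌊β * (Tlow α β)^[n] y + α⌋ := by
      exact_mod_cast Int.toNat_of_nonneg hfloor
    rw [Function.iterate_succ_apply', Tlow, hdigit]

theorem isCodedOrbit_highItin (hα : 0 ≤ α) (hβ : 0 < β) {y : ℝ} (hy : y ∈ Ioc 0 1) :
    IsCodedOrbit α β (highItin α β y) fun n => (Thigh α β)^[n] y where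
  nonneg n := (Thigh_iterate_mem_Ioc hy n).1.le
  le_one n := (Thigh_iterate_mem_Ioc hy n).2
  step n := by
    have hceil : 0 < ⌈β * (Thigh α β)^[n] y + α⌉ :=
      Int.ceil_pos.2 (add_pos_of_pos_of_nonneg (mul_pos hβ (Thigh_iterate_mem_Ioc hy n).1) hα)
    have hdigit : (highItin α β y n : ℝ) = ⌈β * (Thigh α β)^[n] y + α⌉ - 1 := by
      exact_mod_cast Int.toNat_of_nonneg (Int.le_sub_one_of_lt hceil)
    rw [Function.iterate_succ_apply', Thigh, hdigit]
    ring

namespace IsCodedOrbit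

theorem Tlow_apply (hs : IsCodedOrbit α β x s) (n : ℕ) :
    Tlow α β (s n) = Int.fract (s (n + 1)) := by
  rw [hs.step, Int.fract_sub_natCast]
  rfl

theorem Thigh_apply (hs : IsCodedOrbit α β x s) (n : ℕ) :
    Thigh α β (s n) = 1 - Int.fract (-s (n + 1)) := by
  rw [hs.step, Thigh_eq, neg_sub', sub_neg_eq_add, Int.fract_add_natCast]

theorem Tlow_iterate (hs : IsCodedOrbit α β x s) {n : ℕ} (h : ∀ i ≤ n, s i < 1) :
    (Tlow α β)^[n] (s 0) = s n := by
  induction n with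
  | zero => rfl
  | succ n ih =>
    rw [Function.iterate_succ_apply', ih fun i hi => h i (hi.trans n.le_succ), hs.Tlow_apply,
      Int.fract_eq_self.2 ⟨hs.nonneg _, h _ le_rfl⟩]

theorem Thigh_iterate (hs : IsCodedOrbit α β x s) {n : ℕ} (h : ∀ i ≤ n, 0 < s i) :
    (Thigh α β)^[n] (s 0) = s n := by
  induction n with
  | zero => rfl
  | succ n ih =>
    have hfract : Int.fract (-s (n + 1)) = 1 - s (n + 1) :=
      Int.fract_eq_iff.2
        ⟨by linarith [hs.le_one (n + 1)], by linarith [h _ le_rfl], -1, by push_cast; ring⟩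
    rw [Function.iterate_succ_apply', ih fun i hi => h i (hi.trans n.le_succ), hs.Thigh_apply,
      hfract, sub_sub_cancel]

theorem eq_lowItin_iff (hs : IsCodedOrbit α β x s) (hα : 0 ≤ α) (hβ : 0 ≤ β) (h0 : s 0 < 1) :
    x = lowItin α β (s 0) ↔ ∀ n, s n < 1 := by
  refine ⟨fun hx n => ?_, fun h => funext fun n => ?_⟩
  · have hmem : s 0 ∈ Ico 0 1 := ⟨hs.nonneg 0, h0⟩
    have hsub := hs.sub_eq_pow_mul_sub (isCodedOrbit_lowItin hα hβ hmem) (m := n)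
      fun i _ => congrFun hx i
    rw [Function.iterate_zero_apply, sub_self, mul_zero, sub_eq_zero] at hsub
    exact hsub ▸ (Tlow_iterate_mem_Ico hmem n).2
  · have hfloor : ⌊β * s n + α⌋ = x n :=
      Int.floor_eq_iff.2 ⟨by push_cast; linarith [hs.step n, hs.nonneg (n + 1)],
        by push_cast; linarith [hs.step n, h (n + 1)]⟩
    rw [lowItin, hs.Tlow_iterate fun i _ => h i, hfloor, Int.toNat_natCast]

theorem eq_highItin_iff (hs : IsCodedOrbit α β x s) (hα : 0 ≤ α) (hβ : 0 < β) (h0 : 0 < s 0) :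
    x = highItin α β (s 0) ↔ ∀ n, 0 < s n := by
  refine ⟨fun hx n => ?_, fun h => funext fun n => ?_⟩
  · have hmem : s 0 ∈ Ioc 0 1 := ⟨h0, hs.le_one 0⟩
    have hsub := hs.sub_eq_pow_mul_sub (isCodedOrbit_highItin hα hβ hmem) (m := n)
      fun i _ => congrFun hx i
    rw [Function.iterate_zero_apply, sub_self, mul_zero, sub_eq_zero] at hsub
    exact hsub ▸ (Thigh_iterate_mem_Ioc hmem n).1
  · have hceil : ⌈β * s n + α⌉ = x n + 1 :=
      Int.ceil_eq_iff.2 ⟨by push_cast; linarith [hs.step n, h (n + 1)],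
        by push_cast; linarith [hs.step n, hs.le_one (n + 1)]⟩
    rw [highItin, hs.Thigh_iterate fun i _ => h i, hceil, add_sub_cancel_right, Int.toNat_natCast]

theorem lowItin_mem_periodicPts (hs : IsCodedOrbit α β x s) (h0 : s 0 = 0) (h1 : ∃ n, s n = 1) :
    lowItin α β 0 ∈ Function.periodicPts shft := by
  classical
  obtain ⟨n, hn⟩ : ∃ n, Nat.find h1 = n + 1 :=
    Nat.exists_eq_succ_of_ne_zero fun h => by simpa [h, h0] using Nat.find_spec h1
  have hlt : ∀ i ≤ n, s i < 1 := fun i hi =>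
    (hs.le_one i).lt_of_ne (Nat.find_min h1 (by omega))
  have hreturn : (Tlow α β)^[n + 1] 0 = 0 := by
    rw [Function.iterate_succ_apply', ← h0, hs.Tlow_iterate hlt, hs.Tlow_apply, ← hn,
      Nat.find_spec h1, Int.fract_one, h0]
  exact (semiconj_lowItin α β).mapsTo_periodicPts
    (Function.mk_mem_periodicPts n.succ_pos hreturn)

theorem highItin_mem_periodicPts (hs : IsCodedOrbit α β x s) (h0 : s 0 = 1)
    (h1 : ∃ n, s n = 0) : highItin α β 1 ∈ Function.periodicPts shft := by
  classical
  obtain ⟨n, hn⟩ : ∃ n, Nat.find h1 = n + 1 :=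
    Nat.exists_eq_succ_of_ne_zero fun h => by simpa [h, h0] using Nat.find_spec h1
  have hpos : ∀ i ≤ n, 0 < s i := fun i hi =>
    (hs.nonneg i).lt_of_ne' (Nat.find_min h1 (by omega))
  have hreturn : (Thigh α β)^[n + 1] 1 = 1 := by
    rw [Function.iterate_succ_apply', ← h0, hs.Thigh_iterate hpos, hs.Thigh_apply, ← hn,
      Nat.find_spec h1, neg_zero, Int.fract_zero, sub_zero, h0]
  exact (semiconj_highItin α β).mapsTo_periodicPts
    (Function.mk_mem_periodicPts n.succ_pos hreturn)

end IsCodedOrbit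

end Itineraries

/-! ### Counting words -/

/-- The words of length `n` that are prefixes of an element of `X`. -/
def prefixes (X : Set (ℕ → ℕ)) (n : ℕ) : Set (Fin n → ℕ) :=
  {w | ∃ x ∈ X, ∀ i : Fin n, x i = w i}

theorem prefixes_subset_piFinset {k : ℕ} {X : Set (ℕ → ℕ)} (hX : ∀ x ∈ X, ∀ i, x i < k) (n : ℕ) :
    prefixes X n ⊆ Fintype.piFinset fun _ : Fin n => Finset.range k := by
  rintro w ⟨x, hx, hw⟩
  simpa only [Finset.mem_coe, Fintype.mem_piFinset, Finset.mem_range, ← hw]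
    using fun i : Fin n => hX x hx i

theorem finite_prefixes {k : ℕ} {X : Set (ℕ → ℕ)} (hX : ∀ x ∈ X, ∀ i, x i < k) (n : ℕ) :
    (prefixes X n).Finite :=
  (Finset.finite_toSet _).subset (prefixes_subset_piFinset hX n)

theorem ncard_prefixes_le_pow {k : ℕ} {X : Set (ℕ → ℕ)} (hX : ∀ x ∈ X, ∀ i, x i < k) (n : ℕ) :
    (prefixes X n).ncard ≤ k ^ n := by
  have h := Set.ncard_le_ncard (prefixes_subset_piFinset hX n)
  rwa [Set.ncard_coe_finset, Fintype.card_piFinset_const, Finset.card_range] at h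

theorem ncard_prefixes_succ_le {X : Set (ℕ → ℕ)} {D : Finset ℕ} {Y : ℕ → Set (ℕ → ℕ)} {n : ℕ}
    (hX : ∀ x ∈ X, x 0 ∈ D ∧ shft x ∈ Y (x 0)) (hY : ∀ d ∈ D, (prefixes (Y d) n).Finite) :
    (prefixes X (n + 1)).ncard ≤ ∑ d ∈ D, (prefixes (Y d) n).ncard := by
  have hsub : prefixes X (n + 1) ⊆ ⋃ d ∈ D, Matrix.vecCons d '' prefixes (Y d) n := by
    rintro w ⟨x, hx, hw⟩
    refine mem_iUnion₂.2
      ⟨x 0, (hX x hx).1, Matrix.vecTail w, ⟨_, (hX x hx).2, fun i => hw i.succ⟩, ?_⟩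
    exact (congrArg (Matrix.vecCons · (Matrix.vecTail w)) (hw 0)).trans (Matrix.cons_head_tail w)
  calc (prefixes X (n + 1)).ncard
      ≤ (⋃ d ∈ D, Matrix.vecCons d '' prefixes (Y d) n).ncard :=
        Set.ncard_le_ncard hsub (D.finite_toSet.biUnion fun d hd => (hY d hd).image _)
    _ ≤ ∑ d ∈ D, (Matrix.vecCons d '' prefixes (Y d) n).ncard := D.set_ncard_biUnion_le _
    _ = ∑ d ∈ D, (prefixes (Y d) n).ncard :=
        Finset.sum_congr rfl fun d _ =>
          Set.ncard_image_of_injective _ (Fin.cons_right_injective (α := fun _ => ℕ) d)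

/-! ### Entropy from word counts -/

theorem nWords_eq_ncard_prefixes (k : ℕ) (u w : ℕ → ℕ) (n : ℕ) :
    nWords k u w n = (prefixes (SigSet k u w) n).ncard :=
  rfl

theorem logb_natCast_nonneg (N : ℕ) : 0 ≤ Real.logb 2 N :=
  div_nonneg (Real.log_natCast_nonneg N) (Real.log_nonneg one_le_two)

theorem logb_div_le_of_le_mul_pow {N n : ℕ} {C γ : ℝ} (hC : 1 ≤ C) (hγ : 1 ≤ γ)
    (h : N ≤ C * γ ^ n) : Real.logb 2 N / n ≤ Real.logb 2 C / n + Real.logb 2 γ := by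
  have hlogC := Real.logb_nonneg one_lt_two hC
  have hlogγ := Real.logb_nonneg one_lt_two hγ
  rcases n.eq_zero_or_pos with rfl | hn
  · simpa using hlogγ
  have hn' : (0 : ℝ) < n := Nat.cast_pos.2 hn
  rw [div_add' _ _ _ hn'.ne']
  gcongr
  rcases N.eq_zero_or_pos with rfl | hN
  · rw [Nat.cast_zero, Real.logb_zero]
    positivity
  · calc Real.logb 2 N
        ≤ Real.logb 2 (C * γ ^ n) := Real.logb_le_logb_of_le one_lt_two (Nat.cast_pos.2 hN) h
      _ = Real.logb 2 C + Real.logb 2 γ * n := by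
        rw [Real.logb_mul (by positivity) (by positivity), Real.logb_pow, mul_comm (n : ℝ)]

theorem two_rpow_entS_le_of_nWords_le {k : ℕ} {u w : ℕ → ℕ} {C γ : ℝ} (hC : 1 ≤ C) (hγ : 1 ≤ γ)
    (h : ∀ n, nWords k u w n ≤ C * γ ^ n) : (2 : ℝ) ^ entS k u w ≤ γ := by
  have hlim : Tendsto (fun n : ℕ => Real.logb 2 C / n + Real.logb 2 γ) atTop
      (nhds (Real.logb 2 γ)) := by
    simpa only [zero_add] using
      (tendsto_const_div_atTop_nhds_zero_nat (Real.logb 2 C)).add_const (Real.logb 2 γ)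
  have hent : entS k u w ≤ Real.logb 2 γ := by
    rw [← hlim.limsup_eq]
    refine limsup_le_limsup (.of_forall fun n => logb_div_le_of_le_mul_pow hC hγ (h n)) ?_
      hlim.isBoundedUnder_le
    exact .of_frequently_ge (a := 0) (Frequently.of_forall fun n =>
      div_nonneg (logb_natCast_nonneg _) n.cast_nonneg)
  exact (Real.le_logb_iff_rpow_le one_lt_two (by positivity)).1 hent

theorem le_two_rpow_entS_of_pow_le_nWords {k : ℕ} {u w : ℕ → ℕ} {γ : ℝ} (hγ : 0 < γ)
    (h : ∀ n, γ ^ n ≤ nWords k u w n) : γ ≤ (2 : ℝ) ^ entS k u w := by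
  have hle_pow (n : ℕ) : nWords k u w n ≤ k ^ n := ncard_prefixes_le_pow (fun x hx => hx.1) n
  have hk : (1 : ℝ) ≤ k := by
    have hpos : (0 : ℝ) < nWords k u w 1 := (pow_pos hγ 1).trans_le (h 1)
    exact_mod_cast (Nat.cast_pos.1 hpos).trans_le ((hle_pow 1).trans_eq (pow_one k))
  refine (Real.logb_le_iff_le_rpow one_lt_two hγ).1 (le_limsup_of_frequently_le ?_ ?_)
  · refine (eventually_gt_atTop 0).frequently.mono fun n hn => ?_
    rw [le_div_iff₀ (Nat.cast_pos.2 hn), mul_comm, ← Real.logb_pow]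
    exact Real.logb_le_logb_of_le one_lt_two (by positivity) (h n)
  · refine isBoundedUnder_of ⟨Real.logb 2 k, fun n => ?_⟩
    have hle : (nWords k u w n : ℝ) ≤ 1 * (k : ℝ) ^ n := by
      rw [one_mul]
      exact_mod_cast hle_pow n
    simpa using logb_div_le_of_le_mul_pow le_rfl hk hle

/-! ### The lower bound for the entropy -/

theorem abs_pow_mul_sub_lt_one {α β : ℝ} (hα : 0 ≤ α) (hβ : 0 ≤ β) {y z : ℝ} (hy : y ∈ Ico 0 1)
    (hz : z ∈ Ico 0 1) {n : ℕ} (h : ∀ i < n, lowItin α β y i = lowItin α β z i) :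
    |β ^ n * (y - z)| < 1 := by
  have hsub := (isCodedOrbit_lowItin hα hβ hy).sub_eq_pow_mul_sub (isCodedOrbit_lowItin hα hβ hz) h
  rw [Function.iterate_zero_apply, Function.iterate_zero_apply] at hsub
  rw [← hsub, abs_sub_lt_iff]
  have hyn := Tlow_iterate_mem_Ico (α := α) (β := β) hy n
  have hzn := Tlow_iterate_mem_Ico (α := α) (β := β) hz n
  exact ⟨by linarith [hyn.2, hzn.1], by linarith [hyn.1, hzn.2]⟩

-- The points `j / β ^ n` of `[0, 1)` have pairwise distinct itineraries up to time `n`.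
theorem pow_le_ncard_prefixes {α β : ℝ} (hα : 0 ≤ α) (hβ : 0 < β) {X : Set (ℕ → ℕ)}
    (hX : ∀ y ∈ Ico 0 1, lowItin α β y ∈ X) {n : ℕ} (hfin : (prefixes X n).Finite) :
    β ^ n ≤ (prefixes X n).ncard := by
  have hmem : ∀ j ∈ Finset.range ⌈β ^ n⌉₊, (j / β ^ n : ℝ) ∈ Ico 0 1 := fun j hj =>
    ⟨by positivity, (div_lt_one₀ (by positivity)).2 (Nat.lt_ceil.1 (Finset.mem_range.1 hj))⟩
  have hinj : InjOn (fun (j : ℕ) (i : Fin n) => lowItin α β (j / β ^ n) i)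
      (Finset.range ⌈β ^ n⌉₊) := fun a ha b hb hab => by
    have habs := abs_pow_mul_sub_lt_one hα hβ.le (hmem a ha) (hmem b hb)
      fun i hi => congrFun hab ⟨i, hi⟩
    rw [← sub_div, mul_div_cancel₀ _ (by positivity)] at habs
    have hint : |(a : ℤ) - b| < 1 := by exact_mod_cast habs
    exact_mod_cast sub_eq_zero.1 (Int.abs_lt_one_iff.1 hint)
  have hcard := Set.ncard_le_ncard_of_injOn (t := prefixes X n) _
    (fun j hj => ⟨_, hX _ (hmem j hj), fun _ => rfl⟩) hinj hfin
  rw [Set.ncard_coe_finset, Finset.card_range] at hcard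
  exact (Nat.le_ceil _).trans (Nat.cast_le.2 hcard)

namespace IsCodedOrbit

variable {α β : ℝ} {k n : ℕ} {u w x : ℕ → ℕ} {U s : ℕ → ℝ}

theorem mem_SigSet (hU : IsCodedOrbit α β u U) (hU0 : U 0 = 0) (hUn : U n = 1) (hβ : 0 < β)
    (hk : α + β ≤ k) (hw : lexLe (shft^[n] u) w) (hs : IsCodedOrbit α β x s)
    (hlt : ∀ i, s i < 1) : x ∈ SigSet k u w := by
  refine ⟨fun i => ?_, fun m => ⟨?_, ?_⟩⟩
  · have hstep : (x i : ℝ) ≤ β * s i + α := by linarith [hs.step i, hs.nonneg (i + 1)]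
    have hlast : β * s i < β * 1 := mul_lt_mul_of_pos_left (hlt i) hβ
    exact_mod_cast hstep.trans_lt (by linarith : β * s i + α < k)
  · by_contra hlex
    obtain ⟨j, hj⟩ := (hs.shift m).exists_le_pow_mul_sub hU (not_lexLe.1 hlex)
    have hnonpos : β ^ j * (U 0 - s (0 + m)) ≤ 0 :=
      mul_nonpos_of_nonneg_of_nonpos (by positivity) (by linarith [hs.nonneg (0 + m)])
    linarith [hlt (j + m), hU.nonneg j]
  · by_contra hlex
    have hle := (hU.shift n).le_of_lexLt (hs.shift m) hβ (hw.trans_lexLt (not_lexLe.1 hlex))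
    simp only [zero_add, hUn] at hle
    exact (hlt m).not_ge hle

theorem le_two_rpow_entS (hU : IsCodedOrbit α β u U) (hU0 : U 0 = 0) (hUn : U n = 1)
    (hα : 0 ≤ α) (hβ : 0 < β) (hk : α + β ≤ k) (hw : lexLe (shft^[n] u) w) :
    β ≤ (2 : ℝ) ^ entS k u w :=
  le_two_rpow_entS_of_pow_le_nWords hβ fun m => pow_le_ncard_prefixes hα hβ
    (fun _ hy => hU.mem_SigSet hU0 hUn hβ hk hw (isCodedOrbit_lowItin hα hβ.le hy)
      fun i => (Tlow_iterate_mem_Ico hy i).2)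
    (finite_prefixes (fun _ hx => hx.1) m)

end IsCodedOrbit

/-! ### The upper bound for the entropy -/

/-- The position of `x` against which the next letter is compared, once the letter `d` has been
compared with `x i`: it advances if `d = x i`, and is reset to `r` otherwise. -/
def matchStep (x : ℕ → ℕ) (r i d : ℕ) : ℕ := if d = x i then i + 1 else r

/-- The elements of `Σ(u, σᵐu)` that may follow a word whose next letter is compared with `u i` for
the lower bound `u`, and with `u j` for the upper bound `σᵐu`. -/
def sigBetween (k : ℕ) (u : ℕ → ℕ) (m i j : ℕ) : Set (ℕ → ℕ) :=
  {x ∈ SigSet k u (shft^[m] u) | lexLe (shft^[i] u) x ∧ lexLe x (shft^[j] u)}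

theorem sigBetween_zero (k : ℕ) (u : ℕ → ℕ) (m : ℕ) :
    sigBetween k u m 0 m = SigSet k u (shft^[m] u) :=
  sep_eq_self_iff_mem_true.2 fun _ hx => hx.2 0

theorem head_mem_Icc_of_mem_sigBetween {k m i j : ℕ} {u x : ℕ → ℕ} (hx : x ∈ sigBetween k u m i j) :
    x 0 ∈ Finset.Icc (u i) (u j) := by
  have hlow := hx.2.1.head_le
  have hhigh := hx.2.2.head_le
  rw [shft_iterate_apply, zero_add] at hlow hhigh
  exact Finset.mem_Icc.2 ⟨hlow, hhigh⟩

theorem shft_mem_sigBetween {k m i j : ℕ} {u x : ℕ → ℕ} (hx : x ∈ sigBetween k u m i j) :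
    shft x ∈ sigBetween k u m (matchStep u 0 i (x 0)) (matchStep u m j (x 0)) := by
  obtain ⟨⟨hdigit, hlex⟩, hlow, hhigh⟩ := hx
  refine ⟨⟨fun i => hdigit (i + 1), fun n => hlex (n + 1)⟩, ?_, ?_⟩
  · unfold matchStep
    split_ifs with hmatch
    · rw [Function.iterate_succ_apply']
      refine (hlow.head_lt_or_tail.resolve_left fun hlt => ?_).2
      rw [hmatch, shft_iterate_apply, zero_add] at hlt
      exact hlt.false
    · exact (hlex 1).1
  · unfold matchStep
    split_ifs with hmatch
    · rw [Function.iterate_succ_apply']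
      refine (hhigh.head_lt_or_tail.resolve_left fun hlt => ?_).2
      rw [hmatch, shft_iterate_apply, zero_add] at hlt
      exact hlt.false
    · exact (hlex 1).2

theorem ncard_prefixes_sigBetween_succ_le (k : ℕ) (u : ℕ → ℕ) (m i j n : ℕ) :
    (prefixes (sigBetween k u m i j) (n + 1)).ncard ≤ ∑ d ∈ Finset.Icc (u i) (u j),
      (prefixes (sigBetween k u m (matchStep u 0 i d) (matchStep u m j d)) n).ncard :=
  ncard_prefixes_succ_le
    (fun _ hx => ⟨head_mem_Icc_of_mem_sigBetween hx, shft_mem_sigBetween hx⟩)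
    fun _ _ => finite_prefixes (fun _ hx => hx.1.1) n

theorem sum_matchStep (F : ℕ → ℝ) {x : ℕ → ℕ} {i p q : ℕ} (r : ℕ) (hp : p ≤ x i) (hq : x i ≤ q) :
    ∑ d ∈ Finset.Icc p q, F (matchStep x r i d) = (q - p) * F r + F (i + 1) := by
  have hF (d : ℕ) : F (matchStep x r i d) = F r + if d = x i then F (i + 1) - F r else 0 := by
    unfold matchStep
    split_ifs <;> ring
  simp only [hF, Finset.sum_add_distrib, Finset.sum_const, Finset.sum_ite_eq',
    Finset.mem_Icc, hp, hq, and_self, if_true, Nat.card_Icc, nsmul_eq_mul]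
  rw [Nat.cast_sub (by omega)]
  push_cast
  ring

theorem mul_add_le_mul_add {a β γ D : ℝ} (ha : 0 ≤ a) (hγ : 1 ≤ γ) (h : γ * (1 + a) = β + a)
    (hD : D ≤ 1) : β * D + a ≤ γ * (D + a) := by
  linear_combination mul_le_mul_of_nonneg_left hD (mul_nonneg ha (sub_nonneg.2 hγ)) - D * h

namespace IsCodedOrbit

variable {α β : ℝ} {k m : ℕ} {u : ℕ → ℕ} {U : ℕ → ℝ}

theorem digit_le_of_le (hU : IsCodedOrbit α β u U) (hβ : 0 ≤ β) (hlt : ∀ n, U n < 1) {i j : ℕ}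
    (hij : U i ≤ U j) : u i ≤ u j := by
  have hmul := mul_le_mul_of_nonneg_left hij hβ
  have hcast : (u i : ℝ) < u j + 1 := by
    linarith [hU.step i, hU.step j, hU.nonneg (i + 1), hlt (j + 1)]
  exact Nat.lt_succ_iff.1 (by exact_mod_cast hcast)

theorem matchStep_le_matchStep (hU : IsCodedOrbit α β u U) (hβ : 0 ≤ β) (hU0 : U 0 = 0)
    (hm : ∀ n, U n ≤ U m) {i j : ℕ} (hij : U i ≤ U j) (d : ℕ) :
    U (matchStep u 0 i d) ≤ U (matchStep u m j d) := by
  unfold matchStep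
  split_ifs with hi hj
  · rw [hU.step, hU.step, ← hi, ← hj]
    gcongr
  · exact hm _
  · exact hU0.trans_le (hU.nonneg _)
  · exact hm _

theorem sum_weight (hU : IsCodedOrbit α β u U) (hU0 : U 0 = 0) {i j : ℕ} (hij : u i ≤ u j) :
    ∑ d ∈ Finset.Icc (u i) (u j), (U (matchStep u m j d) - U (matchStep u 0 i d) + (1 - U m)) =
      β * (U j - U i) + (1 - U m) := by
  rw [Finset.sum_add_distrib, Finset.sum_sub_distrib, sum_matchStep U m hij le_rfl,
    sum_matchStep U 0 le_rfl hij, hU.step, hU.step, hU0, Finset.sum_const, Nat.card_Icc,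
    nsmul_eq_mul, Nat.cast_sub (by omega)]
  push_cast
  ring

theorem mul_ncard_prefixes_sigBetween_le (hU : IsCodedOrbit α β u U) (hβ : 1 ≤ β) (hU0 : U 0 = 0)
    (hm : ∀ n, U n ≤ U m) (hm1 : U m < 1) {γ : ℝ} (hγ : γ * (1 + (1 - U m)) = β + (1 - U m))
    (n : ℕ) {i j : ℕ} (hij : U i ≤ U j) :
    (1 - U m) * (prefixes (sigBetween k u m i j) n).ncard ≤ γ ^ n * (U j - U i + (1 - U m)) := by
  have ha : 0 < 1 - U m := sub_pos.2 hm1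
  have hγ1 : 1 ≤ γ := by nlinarith
  induction n generalizing i j with
  | zero =>
    have hcard : ((prefixes (sigBetween k u m i j) 0).ncard : ℝ) ≤ 1 := by
      exact_mod_cast Set.ncard_le_one_of_subsingleton _
    nlinarith
  | succ n ih =>
    have hβ0 : 0 ≤ β := zero_le_one.trans hβ
    have hdigit : u i ≤ u j := hU.digit_le_of_le hβ0 (fun n => (hm n).trans_lt hm1) hij
    have hgap : U j - U i ≤ 1 := by linarith [hU.nonneg i, hU.le_one j]
    calc (1 - U m) * (prefixes (sigBetween k u m i j) (n + 1)).ncard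
        ≤ (1 - U m) * ∑ d ∈ Finset.Icc (u i) (u j),
            (prefixes (sigBetween k u m (matchStep u 0 i d) (matchStep u m j d)) n).ncard := by
          gcongr
          exact_mod_cast ncard_prefixes_sigBetween_succ_le k u m i j n
      _ ≤ ∑ d ∈ Finset.Icc (u i) (u j),
            γ ^ n * (U (matchStep u m j d) - U (matchStep u 0 i d) + (1 - U m)) := by
          rw [Nat.cast_sum, Finset.mul_sum]
          exact Finset.sum_le_sum fun d _ => ih (hU.matchStep_le_matchStep hβ0 hU0 hm hij d)
      _ = γ ^ n * (β * (U j - U i) + (1 - U m)) := by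
          rw [← Finset.mul_sum, hU.sum_weight hU0 hdigit]
      _ ≤ γ ^ n * (γ * (U j - U i + (1 - U m))) := by
          gcongr
          exact mul_add_le_mul_add ha.le hγ1 hγ hgap
      _ = γ ^ (n + 1) * (U j - U i + (1 - U m)) := by ring

theorem two_rpow_entS_lt (hU : IsCodedOrbit α β u U) (hβ : 1 < β) (hU0 : U 0 = 0)
    (hm : ∀ n, U n ≤ U m) (hm1 : U m < 1) : (2 : ℝ) ^ entS k u (shft^[m] u) < β := by
  have ha : 0 < 1 - U m := sub_pos.2 hm1
  obtain ⟨γ, hγ⟩ : ∃ γ, γ * (1 + (1 - U m)) = β + (1 - U m) :=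
    ⟨_, div_mul_cancel₀ _ (by positivity)⟩
  have hγ1 : 1 ≤ γ := by nlinarith
  have hγβ : γ < β := by nlinarith
  have hC : 1 ≤ (1 - U m)⁻¹ := (one_le_inv₀ ha).2 (sub_le_self _ (hU.nonneg m))
  refine (two_rpow_entS_le_of_nWords_le hC hγ1 fun n => ?_).trans_lt hγβ
  have hcount := hU.mul_ncard_prefixes_sigBetween_le (k := k) hβ.le hU0 hm hm1 hγ n (hm 0)
  rw [sigBetween_zero, ← nWords_eq_ncard_prefixes, hU0, sub_zero, add_sub_cancel, mul_one] at hcount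
  exact (le_inv_mul_iff₀ ha).2 hcount

end IsCodedOrbit

/-! ### The inverse problem -/

/-- The sequence `n ↦ φ̄_∞^{α,β}(σⁿx)`. -/
noncomputable def phiOrbit (α β : ℝ) (x : ℕ → ℕ) (n : ℕ) : ℝ := phiBInf α β (shft^[n] x)

theorem isCodedOrbit_phiOrbit {α β : ℝ} (hβ : 0 < β) {x : ℕ → ℕ}
    (hx : ∀ n, x n + phiOrbit α β x (n + 1) ∈ Icc α (α + β)) :
    IsCodedOrbit α β x (phiOrbit α β x) where
  nonneg n := (phiBInf_mem_Icc hβ _).1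
  le_one n := (phiBInf_mem_Icc hβ _).2
  step n := by
    have hhead : (shft^[n] x) 0 = x n := by rw [shft_iterate_apply, zero_add]
    have htail : phiOrbit α β x (n + 1) = phiBInf α β (shft (shft^[n] x)) :=
      congrArg (phiBInf α β) (Function.iterate_succ_apply' shft n x)
    have hmem := hx n
    rw [htail, ← hhead] at hmem
    rw [htail, phiBInf_shft_eq hβ hmem, hhead]
    rfl

/-- `(α, β)` solves the inverse problem posed by the strings `u`, `v` over the alphabet
`{0, …, k - 1}`: these are candidates for the codings of the orbits of `0` and `1`, and `α`, `β`
satisfy the two equations `φ̄_∞^{α,β}(σu) = α` and `φ̄_∞^{α,β}(σv) = α + β - k + 1`. -/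
structure IsInverseSolution (k : ℕ) (u v : ℕ → ℕ) (α β : ℝ) : Prop where
  one_lt : 1 < β
  u_zero : u 0 = 0
  v_zero : v 0 + 1 = k
  lex : ∀ n, lexLe u (shft^[n] u) ∧ lexLt (shft^[n] u) v ∧
    lexLt u (shft^[n] v) ∧ lexLe (shft^[n] v) v
  phi_u : phiBInf α β (shft u) = α
  phi_v : phiBInf α β (shft v) = α + β - k + 1

namespace IsInverseSolution

variable {k : ℕ} {u v w : ℕ → ℕ} {α β : ℝ}

theorem pos (h : IsInverseSolution k u v α β) : 0 < β := zero_lt_one.trans h.one_lt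

theorem alpha_mem_Icc (h : IsInverseSolution k u v α β) : α ∈ Icc 0 1 :=
  h.phi_u ▸ phiBInf_mem_Icc h.pos _

theorem alpha_add_beta_le (h : IsInverseSolution k u v α β) : α + β ≤ k := by
  linarith [h.phi_v, (phiBInf_mem_Icc (α := α) h.pos (shft v)).2]

theorem le_head_add_phiBInf (h : IsInverseSolution k u v α β) {y : ℕ → ℕ} (hy : lexLe u y) :
    α ≤ y 0 + phiBInf α β (shft y) := by
  have hnonneg := (phiBInf_mem_Icc (α := α) h.pos (shft y)).1
  rcases hy.head_lt_or_tail with hhead | ⟨-, htail⟩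
  · have hcast : (1 : ℝ) ≤ y 0 := by exact_mod_cast Nat.one_le_of_lt hhead
    linarith [h.alpha_mem_Icc.2]
  · have hphi := phiBInf_le_of_lexLe (α := α) h.pos htail
    rw [h.phi_u] at hphi
    exact hphi.trans (le_add_of_nonneg_left (Nat.cast_nonneg _))

theorem head_add_phiBInf_le (h : IsInverseSolution k u v α β) {y : ℕ → ℕ} (hy : lexLe y v) :
    y 0 + phiBInf α β (shft y) ≤ α + β := by
  have hk : (v 0 : ℝ) + 1 = k := by exact_mod_cast h.v_zero
  rcases hy.head_lt_or_tail with hhead | ⟨hhead, htail⟩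
  · have hcast : (y 0 : ℝ) + 1 ≤ v 0 := by exact_mod_cast hhead
    linarith [h.phi_v, (phiBInf_mem_Icc (α := α) h.pos (shft v)).1,
      (phiBInf_mem_Icc (α := α) h.pos (shft y)).2]
  · rw [hhead]
    linarith [h.phi_v, phiBInf_le_of_lexLe (α := α) h.pos htail]

theorem isCodedOrbit (h : IsInverseSolution k u v α β) {x : ℕ → ℕ}
    (hx : ∀ n, lexLe u (shft^[n] x) ∧ lexLe (shft^[n] x) v) :
    IsCodedOrbit α β x (phiOrbit α β x) := by
  refine isCodedOrbit_phiOrbit h.pos fun n => ?_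
  have hlow := h.le_head_add_phiBInf (hx n).1
  have hhigh := h.head_add_phiBInf_le (hx n).2
  rw [shft_iterate_apply, zero_add, ← Function.iterate_succ_apply' shft] at hlow hhigh
  exact ⟨hlow, hhigh⟩

theorem isCodedOrbit_u (h : IsInverseSolution k u v α β) : IsCodedOrbit α β u (phiOrbit α β u) :=
  h.isCodedOrbit fun n => ⟨(h.lex n).1, .inr (h.lex n).2.1⟩

theorem isCodedOrbit_v (h : IsInverseSolution k u v α β) : IsCodedOrbit α β v (phiOrbit α β v) :=
  h.isCodedOrbit fun n => ⟨.inr (h.lex n).2.2.1, (h.lex n).2.2.2⟩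

theorem phiOrbit_u_zero (h : IsInverseSolution k u v α β) : phiOrbit α β u 0 = 0 := by
  have hstep := h.isCodedOrbit_u.step 0
  rw [show phiOrbit α β u (0 + 1) = α from h.phi_u, h.u_zero, Nat.cast_zero, sub_zero,
    right_eq_add, mul_eq_zero] at hstep
  exact hstep.resolve_left h.pos.ne'

theorem phiOrbit_v_zero (h : IsInverseSolution k u v α β) : phiOrbit α β v 0 = 1 := by
  have hstep := h.isCodedOrbit_v.step 0
  have hk : (v 0 : ℝ) + 1 = k := by exact_mod_cast h.v_zero
  rw [show phiOrbit α β v (0 + 1) = α + β - k + 1 from h.phi_v, ← hk] at hstep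
  exact mul_left_cancel₀ h.pos.ne' (by linarith)

theorem exists_u_eq_one_iff (h : IsInverseSolution k u v α β) :
    (∃ n, phiOrbit α β u n = 1) ↔ ∃ n, phiOrbit α β v n = 0 := by
  constructor
  · rintro ⟨n, hn⟩
    obtain ⟨j, -, hj⟩ := (h.isCodedOrbit_u.shift n).exists_eq_one_and_eq_zero h.isCodedOrbit_v
      (h.lex n).2.1 (by rw [zero_add, hn, h.phiOrbit_v_zero])
    exact ⟨j, hj⟩
  · rintro ⟨n, hn⟩
    obtain ⟨j, hj, -⟩ := h.isCodedOrbit_u.exists_eq_one_and_eq_zero (h.isCodedOrbit_v.shift n)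
      (h.lex n).2.2.1 (by rw [zero_add, hn, h.phiOrbit_u_zero])
    exact ⟨j, hj⟩

theorem eq_uItin_iff (h : IsInverseSolution k u v α β) :
    u = uItin α β ↔ ¬∃ n, phiOrbit α β u n = 1 := by
  have hiff := h.isCodedOrbit_u.eq_lowItin_iff h.alpha_mem_Icc.1 h.pos.le
    (h.phiOrbit_u_zero.trans_lt zero_lt_one)
  rw [h.phiOrbit_u_zero] at hiff
  rw [not_exists]
  exact hiff.trans (forall_congr' fun n => (h.isCodedOrbit_u.le_one n).lt_iff_ne)

theorem eq_vItin_iff (h : IsInverseSolution k u v α β) :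
    v = vItin α β ↔ ¬∃ n, phiOrbit α β v n = 0 := by
  have hiff := h.isCodedOrbit_v.eq_highItin_iff h.alpha_mem_Icc.1 h.pos
    (zero_lt_one.trans_eq h.phiOrbit_v_zero.symm)
  rw [h.phiOrbit_v_zero] at hiff
  rw [not_exists]
  exact hiff.trans (forall_congr' fun n => (h.isCodedOrbit_v.nonneg n).lt_iff_ne')

theorem eq_uItin_iff_eq_vItin (h : IsInverseSolution k u v α β) :
    u = uItin α β ↔ v = vItin α β := by
  rw [h.eq_uItin_iff, h.eq_vItin_iff, h.exists_u_eq_one_iff]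

theorem uItin_mem_periodicPts (h : IsInverseSolution k u v α β) (hne : u ≠ uItin α β) :
    uItin α β ∈ Function.periodicPts shft :=
  h.isCodedOrbit_u.lowItin_mem_periodicPts h.phiOrbit_u_zero
    (not_not.1 (h.eq_uItin_iff.not.1 hne))

theorem vItin_mem_periodicPts (h : IsInverseSolution k u v α β) (hne : u ≠ uItin α β) :
    vItin α β ∈ Function.periodicPts shft :=
  h.isCodedOrbit_v.highItin_mem_periodicPts h.phiOrbit_v_zero
    (h.exists_u_eq_one_iff.1 (not_not.1 (h.eq_uItin_iff.not.1 hne)))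

theorem le_two_rpow_entS (h : IsInverseSolution k u v α β) (hne : u ≠ uItin α β)
    (hub : ∀ n, lexLe (shft^[n] u) w) : β ≤ (2 : ℝ) ^ entS k u w := by
  obtain ⟨n, hn⟩ := not_not.1 (h.eq_uItin_iff.not.1 hne)
  exact h.isCodedOrbit_u.le_two_rpow_entS h.phiOrbit_u_zero hn h.alpha_mem_Icc.1 h.pos
    h.alpha_add_beta_le (hub n)

theorem u_lt (h : IsInverseSolution k u v α β) (n : ℕ) : u n < k := by
  have hhead := lexLe.head_le (.inr (h.lex n).2.1)
  rw [shft_iterate_apply, zero_add] at hhead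
  exact (Nat.lt_succ_of_le hhead).trans_eq h.v_zero

end IsInverseSolution

theorem exists_lexLe_iterate_of_mem_periodicPts {x : ℕ → ℕ}
    (hx : x ∈ Function.periodicPts shft) : ∃ m, ∀ n, lexLe (shft^[n] x) (shft^[m] x) := by
  obtain ⟨p, hp, hper⟩ := hx
  obtain ⟨m, -, hm⟩ := (Finset.range p).exists_max_image (fun n => toLex (shft^[n] x))
    ⟨0, Finset.mem_range.2 hp⟩
  refine ⟨m, fun n => lexLe_iff_toLex_le.2 ?_⟩
  rw [← hper.iterate_mod_apply]
  exact hm _ (Finset.mem_range.2 (Nat.mod_lt n hp))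

theorem IsInverseSolution.two_rpow_entS_lt {k : ℕ} {u v w : ℕ → ℕ} {α β : ℝ}
    (h : IsInverseSolution k u v α β) (hub : ∀ n, lexLe (shft^[n] u) w)
    (hlub : ∀ y : ℕ → ℕ, (∀ i, y i < k) → (∀ n, lexLe (shft^[n] u) y) → lexLe w y)
    (heq : u = uItin α β) (hper : uItin α β ∈ Function.periodicPts shft) :
    (2 : ℝ) ^ entS k u w < β := by
  obtain ⟨m, hm⟩ := exists_lexLe_iterate_of_mem_periodicPts (heq ▸ hper)
  have hw : w = shft^[m] u :=
    (hlub _ (fun i => (shft_iterate_apply m u i).trans_lt (h.u_lt _)) hm).antisymm (hub m)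
  rw [hw]
  exact h.isCodedOrbit_u.two_rpow_entS_lt h.one_lt h.phiOrbit_u_zero
    (fun n => phiBInf_le_of_lexLe h.pos (hm n))
    ((h.isCodedOrbit_u.le_one m).lt_of_ne (not_exists.1 (h.eq_uItin_iff.1 heq) m))

theorem inverse_problem_first_form_general {k : ℕ} {u v uhat : ℕ → ℕ} {α β : ℝ}
    (h : IsInverseSolution k u v α β) (huhat_ub : ∀ n, lexLe (shft^[n] u) uhat)
    (huhat_lub : ∀ w : ℕ → ℕ, (∀ i, w i < k) → (∀ n, lexLe (shft^[n] u) w) → lexLe uhat w) :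
    ((2 : ℝ) ^ entS k u uhat < β → u = uItin α β ∧ v = vItin α β) ∧
    (¬(uItin α β ∈ Function.periodicPts shft ∧ vItin α β ∈ Function.periodicPts shft) →
      u = uItin α β ∧ v = vItin α β) ∧
    (β ≤ (2 : ℝ) ^ entS k u uhat → uItin α β ∈ Function.periodicPts shft →
      u ≠ uItin α β ∧ v ≠ vItin α β) := by
  have hboth (hu : u = uItin α β) : u = uItin α β ∧ v = vItin α β :=
    ⟨hu, h.eq_uItin_iff_eq_vItin.1 hu⟩
  refine ⟨fun hent => hboth ?_, fun hper => hboth ?_, fun hent hper => ?_⟩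
  · by_contra hne
    exact hent.not_ge (h.le_two_rpow_entS hne huhat_ub)
  · by_contra hne
    exact hper ⟨h.uItin_mem_periodicPts hne, h.vItin_mem_periodicPts hne⟩
  · have hne : u ≠ uItin α β := fun heq =>
      hent.not_gt (h.two_rpow_entS_lt huhat_ub huhat_lub heq hper)
    exact ⟨hne, h.eq_uItin_iff_eq_vItin.not.1 hne⟩

/-- **Inverse problem for `βx + α mod 1` (first form).** Let `k ≥ 2`, `u, v ∈ A^ℕ` with
`u₀ = 0`, `v₀ = k−1`, `u ≼ σⁿu ≺ v` and `u ≺ σⁿv ≼ v` for all `n ≥ 0` (for `k = 2`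
additionally `σu ≼ σv`). Let `û = sup{σⁿu : n ≥ 0}` (the least upper bound in `A^ℕ`
for the lexicographic order) and `β̂ = 2^{h(Σ(u,û))}`. Suppose
`(ᾱ,β̄) ∈ [0,1] × (1,∞)` satisfies `φ̄_∞^{ᾱ,β̄}(σu) = ᾱ` and
`φ̄_∞^{ᾱ,β̄}(σv) = ᾱ+β̄−k+1`. Then: (1) if `β̂ < β̄`, then `u = u^{ᾱ,β̄}` and
`v = v^{ᾱ,β̄}`; (2) if `β̂ = β̄` and `u^{ᾱ,β̄}`, `v^{ᾱ,β̄}` are not both periodic, the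
same conclusion holds; (3) if `β̂ = β̄` and both are periodic, then `u ≠ u^{ᾱ,β̄}` and
`v ≠ v^{ᾱ,β̄}`. -/
theorem inverse_problem_first_form (k : ℕ) (hk : 2 ≤ k) (u v : ℕ → ℕ)
    (hu : ∀ i, u i < k) (hv : ∀ i, v i < k)
    (hu0 : u 0 = 0) (hv0 : v 0 = k - 1)
    (hcond : ∀ n, lexLe u (shft^[n] u) ∧ lexLt (shft^[n] u) v ∧
                  lexLt u (shft^[n] v) ∧ lexLe (shft^[n] v) v)
    (hk2 : k = 2 → lexLe (shft u) (shft v))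
    (uhat : ℕ → ℕ) (huhat : ∀ i, uhat i < k)
    (huhat_ub : ∀ n, lexLe (shft^[n] u) uhat)
    (huhat_lub : ∀ w : ℕ → ℕ, (∀ i, w i < k) →
      (∀ n, lexLe (shft^[n] u) w) → lexLe uhat w)
    (αb βb : ℝ) (hαb : αb ∈ Set.Icc (0 : ℝ) 1) (hβb : 1 < βb)
    (hequ : phiBInf αb βb (shft u) = αb)
    (heqv : phiBInf αb βb (shft v) = αb + βb - k + 1) :
    ((2 : ℝ) ^ entS k u uhat < βb → u = uItin αb βb ∧ v = vItin αb βb) ∧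
    ((2 : ℝ) ^ entS k u uhat = βb →
      ¬((∃ p, 1 ≤ p ∧ shft^[p] (uItin αb βb) = uItin αb βb) ∧
        (∃ q, 1 ≤ q ∧ shft^[q] (vItin αb βb) = vItin αb βb)) →
      u = uItin αb βb ∧ v = vItin αb βb) ∧
    ((2 : ℝ) ^ entS k u uhat = βb →
      ((∃ p, 1 ≤ p ∧ shft^[p] (uItin αb βb) = uItin αb βb) ∧
       (∃ q, 1 ≤ q ∧ shft^[q] (vItin αb βb) = vItin αb βb)) →
      u ≠ uItin αb βb ∧ v ≠ vItin αb βb) := by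
  have h := inverse_problem_first_form_general
    ⟨hβb, hu0, by omega, hcond, hequ, heqv⟩ huhat_ub huhat_lub
  exact ⟨h.1, fun _ => h.2.1, fun hent hper => h.2.2 hent.ge hper.1⟩
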